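/- arXiv:2510.18380 — 2 statements merged into one kernel-verified Lean document; each statement's English description precedes it below -/
import Mathlib

section
/- Let M ∈ ℝ⁵ be of two-node Gaussian-EQMOM form with parameters (ρ₁, ρ₂, v₁, v₂, σ), ρ₁, ρ₂ > 0, σ > 0, with flux vector F(M), and let a > √3. Define δ⁺ = max{v₁ + aσ, v₂ + aσ, 0} and δ⁻ = min{v₁ − aσ, v₂ − aσ, 0}. Then both Hankel matrices H₂(δ⁺M − F(M)) and H₂(F(M) − δ⁻M) are positive definite. -/
open MeasureTheory Real

/-- The `k`-th moment `Δ_k(v, s²)` of the normal distribution with mean `v` and variance `s²`. -/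
noncomputable def gaussMoment (v s : ℝ) (k : ℕ) : ℝ :=
  ∫ x : ℝ, x ^ k * ((2 * π * s ^ 2) ^ (-(1 : ℝ) / 2) * Real.exp (-(x - v) ^ 2 / (2 * s ^ 2)))

/-- The `3×3` Hankel matrix `H₂(c)` of a vector `c ∈ ℝ⁵`, with `(j,k)` entry `c_{j+k}`. -/
noncomputable def hankel2 (c : Fin 5 → ℝ) : Matrix (Fin 3) (Fin 3) ℝ :=
  Matrix.of fun j k => c ⟨j.1 + k.1, by have := j.isLt; have := k.isLt; omega⟩

/-!
The quadratic form of `H₂(δM - F)` at a polynomial `p` of degree at most `2` is, for each node, the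
expectation of `(δ - X) p(X)²`, whose integrand has degree at most `5`. Three-point Gauss–Hermite
quadrature is exact in that degree, so the normal law of mean `v` and variance `σ²` may be replaced
by three atoms of positive weight at `v` and `v ± √3 σ`. Since `a > √3`, all atoms lie strictly
between `δ⁻` and `δ⁺`, and each Hankel matrix becomes a positive combination of matrices `Vᵀ D V`
with `V` an invertible Vandermonde matrix and `D` a positive diagonal one.
-/

section GaussianMoments

open ProbabilityTheory
open scoped ContDiff NNReal

theorem iteratedDeriv_add_two_of_deriv_eq_affine_mul {f : ℝ → ℝ} {m v : ℝ} (hf : ContDiff ℝ ∞ f)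
    (hf' : ∀ t, deriv f t = (m + v * t) * f t) (n : ℕ) (t : ℝ) :
    iteratedDeriv (n + 2) f t
      = (m + v * t) * iteratedDeriv (n + 1) f t + (n + 1) * v * iteratedDeriv n f t := by
  have hasDerivAt_iteratedDeriv (k : ℕ) (t : ℝ) :
      HasDerivAt (iteratedDeriv k f) (iteratedDeriv (k + 1) f t) t := by
    rw [iteratedDeriv_succ]
    exact (hf.differentiable_iteratedDeriv k (mod_cast WithTop.coe_lt_top k) t).hasDerivAt
  have hasDerivAt_affine (t : ℝ) : HasDerivAt (fun t ↦ m + v * t) v t := by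
    simpa using ((hasDerivAt_id t).const_mul v).const_add m
  induction n generalizing t with
  | zero =>
    have hasDerivAt_f := hasDerivAt_iteratedDeriv 0 t
    rw [iteratedDeriv_zero] at hasDerivAt_f
    conv_lhs => rw [iteratedDeriv_succ, iteratedDeriv_one, funext hf',
      ((hasDerivAt_affine t).fun_mul hasDerivAt_f).deriv]
    rw [iteratedDeriv_zero]
    push_cast
    ring
  | succ n ih =>
    conv_lhs => rw [iteratedDeriv_succ, funext ih,
      (((hasDerivAt_affine t).fun_mul (hasDerivAt_iteratedDeriv (n + 1) t)).fun_add
        ((hasDerivAt_iteratedDeriv n t).const_mul ((n + 1) * v))).deriv]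
    push_cast
    ring

theorem deriv_mgf_id_gaussianReal (m : ℝ) (v : ℝ≥0) (t : ℝ) :
    deriv (mgf id (gaussianReal m v)) t = (m + v * t) * mgf id (gaussianReal m v) t := by
  have exponent : HasDerivAt (fun t ↦ m * t + v * t ^ 2 / 2) (m + v * t) t := by
    refine (((hasDerivAt_id t).const_mul m).add
      (((hasDerivAt_pow 2 t).const_mul (v : ℝ)).div_const 2)).congr_deriv ?_
    norm_num
    ring
  rw [mgf_id_gaussianReal, exponent.exp.deriv, mul_comm]

theorem integral_pow_gaussianReal_eq_iteratedDeriv_mgf (m : ℝ) (v : ℝ≥0) (n : ℕ) :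
    ∫ x, x ^ n ∂gaussianReal m v = iteratedDeriv n (mgf id (gaussianReal m v)) 0 := by
  rw [iteratedDeriv_mgf_zero (by simp [integrableExpSet_id_gaussianReal])]
  rfl

theorem integral_pow_add_two_gaussianReal (m : ℝ) (v : ℝ≥0) (n : ℕ) :
    ∫ x, x ^ (n + 2) ∂gaussianReal m v
      = m * ∫ x, x ^ (n + 1) ∂gaussianReal m v + (n + 1) * v * ∫ x, x ^ n ∂gaussianReal m v := by
  have contDiff_mgf : ContDiff ℝ ∞ (mgf id (gaussianReal m v)) := by
    rw [mgf_id_gaussianReal]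
    fun_prop
  simp only [integral_pow_gaussianReal_eq_iteratedDeriv_mgf]
  simpa only [mul_zero, add_zero] using
    iteratedDeriv_add_two_of_deriv_eq_affine_mul contDiff_mgf (deriv_mgf_id_gaussianReal m v) n 0

theorem gaussMoment_eq_integral_gaussianReal (v : ℝ) {s : ℝ} (hs : s ≠ 0) (k : ℕ) :
    gaussMoment v s k = ∫ x, x ^ k ∂gaussianReal v (s ^ 2).toNNReal := by
  have variance_ne_zero : (s ^ 2).toNNReal ≠ 0 := (toNNReal_pos.2 (by positivity)).ne'
  have rpow_eq_inv_sqrt : (2 * π * s ^ 2) ^ (-(1 : ℝ) / 2) = (√(2 * π * s ^ 2))⁻¹ := by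
    rw [neg_div, rpow_neg (by positivity), sqrt_eq_rpow]
  rw [integral_gaussianReal_eq_integral_smul variance_ne_zero]
  simp only [gaussMoment, gaussianPDFReal, rpow_eq_inv_sqrt, smul_eq_mul,
    coe_toNNReal _ (sq_nonneg s)]
  exact integral_congr_ae (.of_forall fun x ↦ mul_comm _ _)

end GaussianMoments

section GaussHermite

open ProbabilityTheory

/-- The nodes of the three-point Gauss–Hermite quadrature for the normal law of mean `v` and
variance `s²`: the roots of the third Hermite polynomial, scaled by `s` and centred at `v`. -/
noncomputable def gaussHermiteNode (v s : ℝ) : Fin 3 → ℝ :=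
  ![v - √3 * s, v, v + √3 * s]

/-- The weights of the three-point Gauss–Hermite quadrature, normalized to total mass `1`; they go
with the nodes `gaussHermiteNode v s`, for every `v` and `s`. -/
noncomputable def gaussHermiteWeight : Fin 3 → ℝ :=
  ![1 / 6, 2 / 3, 1 / 6]

lemma gaussHermiteWeight_pos (i : Fin 3) : 0 < gaussHermiteWeight i := by
  fin_cases i <;> norm_num [gaussHermiteWeight]

lemma gaussHermiteNode_strictMono (v : ℝ) {s : ℝ} (hs : 0 < s) :
    StrictMono (gaussHermiteNode v s) := by
  have spacing_pos : 0 < √3 * s := by positivity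
  refine Fin.strictMono_iff_lt_succ.2 fun i ↦ ?_
  fin_cases i <;> simpa [gaussHermiteNode] using spacing_pos

theorem integral_pow_gaussianReal_eq_sum_gaussHermite (v s : ℝ) {k : ℕ} (hk : k ≤ 5) :
    ∫ x, x ^ k ∂gaussianReal v (s ^ 2).toNNReal
      = ∑ i, gaussHermiteWeight i * gaussHermiteNode v s i ^ k := by
  set μ := gaussianReal v (s ^ 2).toNNReal
  have recurrence (n : ℕ) : ∫ x, x ^ (n + 2) ∂μ
      = v * ∫ x, x ^ (n + 1) ∂μ + (n + 1) * s ^ 2 * ∫ x, x ^ n ∂μ := by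
    rw [integral_pow_add_two_gaussianReal, coe_toNNReal _ (sq_nonneg s)]
  have moment_zero : ∫ x, x ^ 0 ∂μ = 1 := by simp
  have moment_one : ∫ x, x ^ 1 ∂μ = v := by simp [μ]
  have moment_two : ∫ x, x ^ 2 ∂μ = v ^ 2 + s ^ 2 := by
    rw [recurrence 0, moment_one, moment_zero]
    push_cast
    ring
  have moment_three : ∫ x, x ^ 3 ∂μ = v ^ 3 + 3 * v * s ^ 2 := by
    rw [recurrence 1, moment_two, moment_one]
    push_cast
    ring
  have moment_four : ∫ x, x ^ 4 ∂μ = v ^ 4 + 6 * v ^ 2 * s ^ 2 + 3 * s ^ 4 := by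
    rw [recurrence 2, moment_three, moment_two]
    push_cast
    ring
  have moment_five : ∫ x, x ^ 5 ∂μ = v ^ 5 + 10 * v ^ 3 * s ^ 2 + 15 * v * s ^ 4 := by
    rw [recurrence 3, moment_four, moment_three]
    push_cast
    ring
  have sqrt_three_sq : √3 ^ 2 = (3 : ℝ) := sq_sqrt (by norm_num)
  have sqrt_three_pow_four : √3 ^ 4 = (9 : ℝ) := by
    linear_combination (√3 ^ 2 + 3) * sqrt_three_sq
  simp only [Fin.sum_univ_three, gaussHermiteWeight, gaussHermiteNode, Matrix.cons_val]
  interval_cases k <;>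
    simp only [moment_zero, moment_one, moment_two, moment_three, moment_four, moment_five] <;>
    ring_nf <;> simp only [sqrt_three_sq, sqrt_three_pow_four] <;> ring

theorem gaussMoment_eq_sum_gaussHermite (v : ℝ) {s : ℝ} (hs : s ≠ 0) {k : ℕ} (hk : k ≤ 5) :
    gaussMoment v s k = ∑ i, gaussHermiteWeight i * gaussHermiteNode v s i ^ k := by
  rw [gaussMoment_eq_integral_gaussianReal v hs,
    integral_pow_gaussianReal_eq_sum_gaussHermite v s hk]

end GaussHermite

section Hankel

open Matrix

theorem posDef_hankel_sum_mul_pow {n : ℕ} {w x : Fin n → ℝ} (hw : ∀ i, 0 < w i)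
    (hx : Function.Injective x) :
    (of fun j k : Fin n ↦ ∑ i, w i * x i ^ (j.1 + k.1)).PosDef := by
  have vandermonde_factorization : (of fun j k : Fin n ↦ ∑ i, w i * x i ^ (j.1 + k.1))
      = (vandermonde x)ᴴ * diagonal w * vandermonde x := by
    ext j k
    rw [mul_apply]
    simp only [of_apply, mul_diagonal, conjTranspose_apply, vandermonde_apply,
      star_trivial, pow_add]
    exact Finset.sum_congr rfl fun i _ ↦ by ring
  rw [vandermonde_factorization]
  refine (PosDef.diagonal hw).conjTranspose_mul_mul_same (mulVec_injective_of_isUnit ?_)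
  rw [isUnit_iff_isUnit_det, isUnit_iff_ne_zero]
  exact det_vandermonde_ne_zero_iff.2 hx

lemma posDef_hankel2_mul_add_mul {b c : Fin 5 → ℝ} (hb : (hankel2 b).PosDef)
    (hc : (hankel2 c).PosDef) {r s : ℝ} (hr : 0 < r) (hs : 0 < s) :
    (hankel2 fun k ↦ r * b k + s * c k).PosDef :=
  (hb.smul hr).add (hc.smul hs)

theorem posDef_hankel2_affine_mul_gaussMoment {v s p q : ℝ} (hs : 0 < s)
    (hpos : ∀ i, 0 < p + q * gaussHermiteNode v s i) :
    (hankel2 fun k ↦ p * gaussMoment v s k.1 + q * gaussMoment v s (k.1 + 1)).PosDef := by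
  have moment_eq_sum (k : Fin 5) : p * gaussMoment v s k.1 + q * gaussMoment v s (k.1 + 1)
      = ∑ i, gaussHermiteWeight i * (p + q * gaussHermiteNode v s i)
          * gaussHermiteNode v s i ^ k.1 := by
    rw [gaussMoment_eq_sum_gaussHermite v hs.ne' (by lia),
      gaussMoment_eq_sum_gaussHermite v hs.ne' (by lia), Finset.mul_sum, Finset.mul_sum,
      ← Finset.sum_add_distrib]
    exact Finset.sum_congr rfl fun i _ ↦ by ring
  simp only [moment_eq_sum]
  exact posDef_hankel_sum_mul_pow (fun i ↦ mul_pos (gaussHermiteWeight_pos i) (hpos i))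
    (gaussHermiteNode_strictMono v hs).injective

theorem posDef_hankel2_mul_gaussMoment_sub {v s d : ℝ} (hs : 0 < s) (hd : v + √3 * s < d) :
    (hankel2 fun k ↦ d * gaussMoment v s k.1 - gaussMoment v s (k.1 + 1)).PosDef := by
  have node_lt (i : Fin 3) : gaussHermiteNode v s i < d :=
    ((gaussHermiteNode_strictMono v hs).monotone (Fin.le_last i)).trans_lt hd
  convert posDef_hankel2_affine_mul_gaussMoment (p := d) (q := -1) hs
    fun i ↦ by linarith [node_lt i] using 3
  ring

theorem posDef_hankel2_gaussMoment_sub_mul {v s d : ℝ} (hs : 0 < s) (hd : d < v - √3 * s) :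
    (hankel2 fun k ↦ gaussMoment v s (k.1 + 1) - d * gaussMoment v s k.1).PosDef := by
  have lt_node (i : Fin 3) : d < gaussHermiteNode v s i :=
    hd.trans_le ((gaussHermiteNode_strictMono v hs).monotone (Fin.zero_le i))
  convert posDef_hankel2_affine_mul_gaussMoment (p := -d) (q := 1) hs
    fun i ↦ by linarith [lt_node i] using 3
  ring

end Hankel

/-- for a two-node Gaussian-EQMOM moment vector `M` with flux `F`, and `a > √3`,
with `δ⁺ = max{v₁+aσ, v₂+aσ, 0}` and `δ⁻ = min{v₁−aσ, v₂−aσ, 0}`, both `H₂(δ⁺M − F)` and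
`H₂(F − δ⁻M)` are positive definite. -/
theorem eqmom_hankel_posDef (ρ₁ ρ₂ v₁ v₂ σ a : ℝ)
    (hρ₁ : 0 < ρ₁) (hρ₂ : 0 < ρ₂) (hσ : 0 < σ) (ha : Real.sqrt 3 < a)
    (M F : Fin 5 → ℝ)
    (hM : ∀ k : Fin 5, M k = ρ₁ * gaussMoment v₁ σ k.1 + ρ₂ * gaussMoment v₂ σ k.1)
    (hF : ∀ k : Fin 5, F k = ρ₁ * gaussMoment v₁ σ (k.1 + 1) + ρ₂ * gaussMoment v₂ σ (k.1 + 1)) :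
    (hankel2 (fun k => max (max (v₁ + a * σ) (v₂ + a * σ)) 0 * M k - F k)).PosDef ∧
    (hankel2 (fun k => F k - min (min (v₁ - a * σ) (v₂ - a * σ)) 0 * M k)).PosDef := by
  have sqrt_three_mul_lt : √3 * σ < a * σ := mul_lt_mul_of_pos_right ha hσ
  constructor
  · set δ := max (max (v₁ + a * σ) (v₂ + a * σ)) 0
    have hδ₁ : v₁ + a * σ ≤ δ := (le_max_left _ _).trans (le_max_left _ _)
    have hδ₂ : v₂ + a * σ ≤ δ := (le_max_right _ _).trans (le_max_left _ _)
    convert posDef_hankel2_mul_add_mul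
      (posDef_hankel2_mul_gaussMoment_sub (d := δ) hσ (by linarith : v₁ + √3 * σ < δ))
      (posDef_hankel2_mul_gaussMoment_sub (d := δ) hσ (by linarith : v₂ + √3 * σ < δ))
      hρ₁ hρ₂ using 3 with k
    rw [hM, hF]
    ring
  · set δ := min (min (v₁ - a * σ) (v₂ - a * σ)) 0
    have hδ₁ : δ ≤ v₁ - a * σ := (min_le_left _ _).trans (min_le_left _ _)
    have hδ₂ : δ ≤ v₂ - a * σ := (min_le_left _ _).trans (min_le_right _ _)
    convert posDef_hankel2_mul_add_mul
      (posDef_hankel2_gaussMoment_sub_mul (d := δ) hσ (by linarith : δ < v₁ - √3 * σ))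
      (posDef_hankel2_gaussMoment_sub_mul (d := δ) hσ (by linarith : δ < v₂ - √3 * σ))
      hρ₁ hρ₂ using 3 with k
    rw [hM, hF]
    ring
end

section
/- Let M ∈ ℝ⁵ be of three-point HyQMOM form with parameters (ρ₁, ρ₂, ρ₃, v₁, v₂, v₃), ρ₁, ρ₂, ρ₃ ≥ 0, with flux vector F(M). Define δ⁺ = max{v₁, v₂, v₃, 0} and δ⁻ = min{v₁, v₂, v₃, 0}. Then both Hankel matrices H₂(δ⁺M − F(M)) and H₂(F(M) − δ⁻M) are positive semidefinite. -/
/-!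
Multiplying the measure `∑ ρᵢ δ_{vᵢ}` by `b - x` turns its moments `M k` into
`b * M k - M (k + 1)`, and replaces the weights `ρᵢ` by `ρᵢ (b - vᵢ)`, which are nonnegative when
`b` bounds the nodes from above. A Hankel matrix of moments with nonnegative weights `w` factors as
`Vᵀ * diagonal w * V` with `V` the Vandermonde matrix of the nodes, so it is positive semidefinite.
The lower bound is symmetric.
-/

open Matrix

section AtomicMoment

variable {ι R : Type*} [Fintype ι] [CommRing R]

/-- The Hankel matrix with entries `c (j + k)`, of size `n + 1` to match the paper's `H_n`.
A sequence indexed by `ℕ` avoids bound proofs; only `c 0, …, c (2 * n)` occur. -/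
def hankel (n : ℕ) (c : ℕ → R) : Matrix (Fin (n + 1)) (Fin (n + 1)) R :=
  Matrix.of fun j k => c (j + k)

/-- The `k`-th moment of the atomic measure with weight `w i` at the node `x i`, the weights being
allowed to be negative. -/
def atomicMoment (w x : ι → R) (k : ℕ) : R :=
  ∑ i, w i * x i ^ k

theorem mul_atomicMoment_sub_atomicMoment_succ (w x : ι → R) (b : R) (k : ℕ) :
    b * atomicMoment w x k - atomicMoment w x (k + 1) =
      atomicMoment (fun i => w i * (b - x i)) x k := by
  simp only [atomicMoment, Finset.mul_sum, ← Finset.sum_sub_distrib]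
  exact Finset.sum_congr rfl fun i _ => by ring

theorem atomicMoment_succ_sub_mul_atomicMoment (w x : ι → R) (a : R) (k : ℕ) :
    atomicMoment w x (k + 1) - a * atomicMoment w x k =
      atomicMoment (fun i => w i * (x i - a)) x k := by
  simp only [atomicMoment, Finset.mul_sum, ← Finset.sum_sub_distrib]
  exact Finset.sum_congr rfl fun i _ => by ring

theorem hankel_atomicMoment [DecidableEq ι] (n : ℕ) (w x : ι → R) :
    hankel n (atomicMoment w x) =
      (rectVandermonde x 1 (n + 1))ᵀ * diagonal w * rectVandermonde x 1 (n + 1) := by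
  ext j k
  rw [mul_apply]
  simp only [hankel, atomicMoment, of_apply, mul_diagonal, transpose_apply,
    rectVandermonde_apply, Pi.one_apply, one_pow, mul_one]
  exact Finset.sum_congr rfl fun i _ => by ring

variable [PartialOrder R] [StarRing R] [TrivialStar R] [StarOrderedRing R]

theorem posSemidef_hankel_atomicMoment (n : ℕ) {w : ι → R} (hw : ∀ i, 0 ≤ w i) (x : ι → R) :
    (hankel n (atomicMoment w x)).PosSemidef := by
  classical
  rw [hankel_atomicMoment, ← conjTranspose_eq_transpose_of_trivial]
  exact (PosSemidef.diagonal hw).conjTranspose_mul_mul_same _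

theorem hyqmom_hankel_posSemidef_general (n : ℕ) {ρ v : ι → R} {a b : R}
    (hρ : ∀ i, 0 ≤ ρ i) (ha : ∀ i, a ≤ v i) (hb : ∀ i, v i ≤ b) :
    (hankel n fun k => b * atomicMoment ρ v k - atomicMoment ρ v (k + 1)).PosSemidef ∧
    (hankel n fun k => atomicMoment ρ v (k + 1) - a * atomicMoment ρ v k).PosSemidef := by
  simp only [mul_atomicMoment_sub_atomicMoment_succ, atomicMoment_succ_sub_mul_atomicMoment]
  exact ⟨posSemidef_hankel_atomicMoment n (fun i => mul_nonneg (hρ i) (sub_nonneg.2 (hb i))) v,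
    posSemidef_hankel_atomicMoment n (fun i => mul_nonneg (hρ i) (sub_nonneg.2 (ha i))) v⟩

end AtomicMoment

/-- for a three-point HyQMOM moment vector `M` with nonnegative weights and flux
`F`, with `δ⁺ = max{v₁,v₂,v₃,0}` and `δ⁻ = min{v₁,v₂,v₃,0}`, both `H₂(δ⁺M − F)` and
`H₂(F − δ⁻M)` are positive semidefinite. -/
theorem hyqmom_hankel_posSemidef (ρ₁ ρ₂ ρ₃ v₁ v₂ v₃ : ℝ)
    (hρ₁ : 0 ≤ ρ₁) (hρ₂ : 0 ≤ ρ₂) (hρ₃ : 0 ≤ ρ₃)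
    (M F : Fin 5 → ℝ)
    (hM : ∀ k : Fin 5, M k = ρ₁ * v₁ ^ k.1 + ρ₂ * v₂ ^ k.1 + ρ₃ * v₃ ^ k.1)
    (hF : ∀ k : Fin 5, F k = ρ₁ * v₁ ^ (k.1 + 1) + ρ₂ * v₂ ^ (k.1 + 1) + ρ₃ * v₃ ^ (k.1 + 1)) :
    (hankel2 (fun k => max (max (max v₁ v₂) v₃) 0 * M k - F k)).PosSemidef ∧
    (hankel2 (fun k => F k - min (min (min v₁ v₂) v₃) 0 * M k)).PosSemidef := by
  obtain rfl : M = fun k : Fin 5 => atomicMoment ![ρ₁, ρ₂, ρ₃] ![v₁, v₂, v₃] k := by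
    ext k; simp [hM, atomicMoment, Fin.sum_univ_three]
  obtain rfl : F = fun k : Fin 5 => atomicMoment ![ρ₁, ρ₂, ρ₃] ![v₁, v₂, v₃] (k + 1) := by
    ext k; simp [hF, atomicMoment, Fin.sum_univ_three]
  -- `hankel2` of a truncated sequence unfolds to `hankel 2` of the sequence.
  exact hyqmom_hankel_posSemidef_general 2 (by simp [Fin.forall_fin_succ, *])
    (by simp [Fin.forall_fin_succ]) (by simp [Fin.forall_fin_succ])
end
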